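/- Let W be a finite reflection group with root system Φ, a a generic point, Φ⁺ = {α ∈ Φ : ⟨a,α⟩ > 0}, and Δ a simple system for Φ⁺. Then every nonempty exposed face of the permutahedron conv{w(a) : w ∈ W} is of the form w(F_I) for some w ∈ W and some I ⊆ Δ, where W_I is the subgroup generated by {s_α : α ∈ I} and F_I = conv{u(a) : u ∈ W_I}. -/

import Mathlib

/-!
Represent the functional exposing the face `B` as `⟪c, ·⟫`, choose `w ∈ W` maximizing `⟪c, w a⟫`,
and put `d = w⁻¹ c`. Then `⟪d, ·⟫` attains its maximum over the orbit of `a` at `a` itself, so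
comparing `a` with its reflections gives `0 ≤ ⟪d, α⟫` for every `α ∈ Δ`. Let `I` be the set of
`α ∈ Δ` with `⟪d, α⟫ = 0`. Since `B` is the convex hull of the orbit points maximizing `⟪c, ·⟫`
(`maximizers_convexHull`), it is enough to show that the orbit points maximizing `⟪d, ·⟫` are exactly
the points of `W_I a`. The group `W_I` fixes `d`, which gives one inclusion. Conversely, given a
maximizing orbit point `x`, take `v ∈ W_I` maximizing `⟪a, v x⟫`. The point `v x` has nonnegative
product with the roots of `I` by the choice of `v`, and with those of `Δ \ I` because it maximizes
`⟪d, ·⟫`. Thus `v x` is dominant, and the only dominant point of the orbit of `a` is `a`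
(`dominant_eq`), so `x = v⁻¹ a`.

Uniqueness of the dominant point is the statement that an element of `W` preserving the positive
system is trivial. It follows from three standard facts: a simple reflection permutes the positive
roots other than its own (`simple_refl_pos`), `W` is generated by the simple reflections
(`le_genSubgroup`), and a word in simple reflections sending a simple root `α` to a negative root
loses a letter after multiplication by `s_α` (`deletion`).
-/

open scoped RealInnerProductSpace

variable {V : Type*} [NormedAddCommGroup V] [InnerProductSpace ℝ V]

/-- `s` acts as the orthogonal reflection along the nonzero vector `α`:
`s v = v - 2 (⟪v,α⟫/⟪α,α⟫) α`. -/
def IsReflAlong (s : V ≃ₗᵢ[ℝ] V) (α : V) : Prop :=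
  α ≠ 0 ∧ ∀ v : V, s v = v - ((2 * ⟪v, α⟫ / ⟪α, α⟫) • α)

/-- `s` is a reflection. -/
def IsReflection (s : V ≃ₗᵢ[ℝ] V) : Prop :=
  ∃ α : V, IsReflAlong s α

/-- A reflection group: a subgroup of the group of linear isometries of `V` generated by
the reflections it contains. -/
def IsReflectionGroup (W : Subgroup (V ≃ₗᵢ[ℝ] V)) : Prop :=
  W = Subgroup.closure {s | IsReflection s ∧ s ∈ W}

/-- `a` is a generic point for `W`: it is fixed by no reflection belonging to `W`. -/
def IsGeneric (W : Subgroup (V ≃ₗᵢ[ℝ] V)) (a : V) : Prop :=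
  ∀ s ∈ W, IsReflection s → s a ≠ a

/-- The `W`-orbit of the point `a`. -/
def orbitSet (W : Subgroup (V ≃ₗᵢ[ℝ] V)) (a : V) : Set V :=
  {x | ∃ w ∈ W, x = w a}

/-- The permutahedron `Perm^a(W)`: the convex hull of the `W`-orbit of `a`. -/
noncomputable def permutahedron (W : Subgroup (V ≃ₗᵢ[ℝ] V)) (a : V) : Set V :=
  convexHull ℝ (orbitSet W a)

/-- A root system for `W`. -/
structure IsRootSystem (W : Subgroup (V ≃ₗᵢ[ℝ] V)) (Φ : Set V) : Prop where
  finite : Φ.Finite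
  nonempty : Φ.Nonempty
  ne_zero : ∀ α ∈ Φ, α ≠ 0
  gen : W = Subgroup.closure {s | ∃ α ∈ Φ, IsReflAlong s α}
  line : ∀ α ∈ Φ, {β ∈ Φ | ∃ t : ℝ, β = t • α} = {α, -α}
  stable : ∀ w ∈ W, (⇑w) '' Φ = Φ

/-- The positive system determined by the generic point `a`: roots `α` with `⟪a, α⟫ > 0`. -/
def posSystem (a : V) (Φ : Set V) : Set V :=
  {α ∈ Φ | 0 < ⟪a, α⟫}

/-- `Δ` is a simple system for the positive system `Φp`: `Δ ⊆ Φp` is linearly independent and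
every element of `Φp` is a linear combination of `Δ` with nonnegative coefficients. -/
def IsSimpleSystem (Φp Δ : Set V) : Prop :=
  Δ ⊆ Φp ∧ LinearIndependent ℝ ((↑) : Δ → V) ∧
    ∀ β ∈ Φp, ∃ c : V →₀ ℝ, (c.support : Set V) ⊆ Δ ∧ (∀ v : V, 0 ≤ c v) ∧
      β = c.sum fun v r => r • v

/-- The subgroup generated by the reflections along the vectors of `I`. -/
def genSubgroup (I : Set V) : Subgroup (V ≃ₗᵢ[ℝ] V) :=
  Subgroup.closure {s | ∃ β ∈ I, IsReflAlong s β}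

/-! ### Reflections -/

lemma exists_refl {α : V} (hα : α ≠ 0) : ∃ s : V ≃ₗᵢ[ℝ] V, IsReflAlong s α := by
  refine ⟨(ℝ ∙ α)ᗮ.reflection, hα, fun v => ?_⟩
  rw [Submodule.reflection_orthogonal_apply, Submodule.reflection_singleton_apply,
    real_inner_self_eq_norm_sq, real_inner_comm, ← Nat.cast_smul_eq_nsmul ℝ, smul_smul]
  simp only [Nat.cast_ofNat, RCLike.ofReal_real_eq_id, id_eq, neg_sub, mul_div_assoc]

namespace IsReflAlong

variable {s t : V ≃ₗᵢ[ℝ] V} {α : V}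

lemma unique (hs : IsReflAlong s α) (ht : IsReflAlong t α) : s = t := by
  ext v
  rw [hs.2, ht.2]

lemma self_ne (hs : IsReflAlong s α) : (⟪α, α⟫ : ℝ) ≠ 0 := by
  simpa using hs.1

lemma apply_self (hs : IsReflAlong s α) : s α = -α := by
  rw [hs.2, mul_div_assoc, div_self hs.self_ne]
  module

lemma mul_self (hs : IsReflAlong s α) : s * s = 1 := by
  ext v
  change s (s v) = v
  rw [hs.2 v, map_sub, map_smul, hs.apply_self, hs.2 v]
  module

lemma neg (hs : IsReflAlong s α) : IsReflAlong s (-α) := by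
  refine ⟨neg_ne_zero.2 hs.1, fun v => ?_⟩
  rw [hs.2 v, inner_neg_neg, inner_neg_right, mul_neg, neg_div, neg_smul_neg]

lemma conj (hs : IsReflAlong s α) (g : V ≃ₗᵢ[ℝ] V) : IsReflAlong (g * s * g⁻¹) (g α) := by
  refine ⟨by simpa using hs.1, fun v => ?_⟩
  obtain ⟨u, rfl⟩ := g.surjective v
  change g (s (g.symm (g u))) = _
  rw [g.symm_apply_apply, hs.2, map_sub, map_smul, g.inner_map_map, g.inner_map_map]

lemma inner_apply (hs : IsReflAlong s α) (c v : V) :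
    (⟪c, s v⟫ : ℝ) = ⟪c, v⟫ - 2 * (⟪v, α⟫ * ⟪c, α⟫) / ⟪α, α⟫ := by
  rw [hs.2, inner_sub_right, inner_smul_right]
  ring

/-- If reflecting `y` does not increase its product with `c`, then `c` and `y` lie on the same
closed side of the mirror. -/
lemma nonneg_of_le (hs : IsReflAlong s α) {c y : V} (h : (⟪c, s y⟫ : ℝ) ≤ ⟪c, y⟫) :
    0 ≤ (⟪y, α⟫ * ⟪c, α⟫ : ℝ) := by
  rw [hs.inner_apply] at h
  by_contra! hn
  have hp : (0 : ℝ) < ⟪α, α⟫ := real_inner_self_pos.2 hs.1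
  have := div_neg_of_neg_of_pos (by linarith : 2 * (⟪y, α⟫ * ⟪c, α⟫ : ℝ) < 0) hp
  linarith

end IsReflAlong

lemma inner_inv_apply (g : V ≃ₗᵢ[ℝ] V) (x y : V) : (⟪g⁻¹ x, y⟫ : ℝ) = ⟪x, g y⟫ := by
  rw [← g.inner_map_map]
  change (⟪g (g.symm x), g y⟫ : ℝ) = _
  rw [g.apply_symm_apply]

/-! ### Positive and simple roots -/

section Roots

variable {W : Subgroup (V ≃ₗᵢ[ℝ] V)} {Φ Δ : Set V} {a : V}

lemma refl_mem (hΦ : IsRootSystem W Φ) {s : V ≃ₗᵢ[ℝ] V} {α : V} (hα : α ∈ Φ)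
    (hs : IsReflAlong s α) : s ∈ W := by
  rw [hΦ.gen]
  exact Subgroup.subset_closure ⟨α, hα, hs⟩

lemma root_map (hΦ : IsRootSystem W Φ) {w : V ≃ₗᵢ[ℝ] V} (hw : w ∈ W) {α : V} (hα : α ∈ Φ) :
    w α ∈ Φ := by
  rw [← hΦ.stable w hw]
  exact ⟨α, hα, rfl⟩

lemma root_neg (hΦ : IsRootSystem W Φ) {α : V} (hα : α ∈ Φ) : -α ∈ Φ := by
  have h : -α ∈ ({α, -α} : Set V) := by simp
  rw [← hΦ.line α hα] at h
  exact h.1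

lemma inner_root_ne (hΦ : IsRootSystem W Φ) (ha : IsGeneric W a) {α : V} (hα : α ∈ Φ) :
    (⟪a, α⟫ : ℝ) ≠ 0 := by
  obtain ⟨s, hs⟩ := exists_refl (hΦ.ne_zero α hα)
  intro h
  apply ha s (refl_mem hΦ hα hs) ⟨α, hs⟩
  rw [hs.2, h]
  simp

lemma genSubgroup_le (hΦ : IsRootSystem W Φ) {I : Set V} (hI : I ⊆ Φ) : genSubgroup I ≤ W := by
  refine (Subgroup.closure_le _).2 ?_
  rintro s ⟨β, hβ, hs⟩
  exact refl_mem hΦ (hI hβ) hs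

/-- A reflection in a simple root `α` keeps every positive root other than `α` positive: otherwise
`β` and `-s β` would be two nonnegative combinations of `Δ` with sum a multiple of `α`, which by
linear independence makes `β` proportional to `α`. -/
lemma simple_refl_pos (hΦ : IsRootSystem W Φ) (ha : IsGeneric W a)
    (hΔ : IsSimpleSystem (posSystem a Φ) Δ) {s : V ≃ₗᵢ[ℝ] V} {α β : V} (hα : α ∈ Δ)
    (hs : IsReflAlong s α) (hβ : β ∈ posSystem a Φ) (hne : β ≠ α) : (0 : ℝ) < ⟪a, s β⟫ := by
  by_contra! hn
  have hαp := hΔ.1 hα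
  have hsβ : s β ∈ Φ := root_map hΦ (refl_mem hΦ hαp.1 hs) hβ.1
  have hneg : -s β ∈ posSystem a Φ := by
    refine ⟨root_neg hΦ hsβ, ?_⟩
    rw [inner_neg_right]
    have := lt_of_le_of_ne hn (inner_root_ne hΦ ha hsβ)
    linarith
  obtain ⟨c, hcs, hc0, hc⟩ := hΔ.2.2 β hβ
  obtain ⟨c', hcs', hc0', hc'⟩ := hΔ.2.2 _ hneg
  have hli : LinearIndepOn ℝ id Δ := hΔ.2.1
  rw [linearIndepOn_iff] at hli
  have hk := hs.2 β
  set k : ℝ := 2 * ⟪β, α⟫ / ⟪α, α⟫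
  have hz := hli (c + c' - Finsupp.single α k)
    (sub_mem (add_mem ((Finsupp.mem_supported ℝ c).2 hcs) ((Finsupp.mem_supported ℝ c').2 hcs'))
      (Finsupp.single_mem_supported ℝ k hα)) (by
      rw [map_sub, map_add, Finsupp.linearCombination_single]
      simp only [Finsupp.linearCombination_apply, id_eq]
      rw [← hc, ← hc', hk]
      module)
  have hcv : ∀ v, v ≠ α → c v = 0 := by
    intro v hv
    have := DFunLike.congr_fun hz v
    simp [hv.symm] at this
    linarith [hc0 v, hc0' v]
  have hβα : β = c α • α := by
    rw [hc]
    by_cases h0 : c α = 0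
    · have : c = 0 := by
        ext v
        by_cases hv : v = α
        · rw [hv, h0]; rfl
        · exact hcv v hv
      simp [this]
    · exact Finsupp.sum_eq_single α (fun v _ hv => by rw [hcv v hv, zero_smul]) (by simp)
  have hmem : β ∈ {β ∈ Φ | ∃ t : ℝ, β = t • α} := ⟨hβ.1, _, hβα⟩
  rw [hΦ.line α hαp.1] at hmem
  rcases hmem with h | h
  · exact hne h
  · have h1 := hβ.2
    rw [Set.mem_singleton_iff.1 h, inner_neg_right] at h1
    linarith [hαp.2]

/-- Nonnegativity on the simple roots propagates to all positive roots. -/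
lemma inner_nonneg_of_simple (hΔ : IsSimpleSystem (posSystem a Φ) Δ) {y : V}
    (hy : ∀ α ∈ Δ, (0 : ℝ) ≤ ⟪y, α⟫) {β : V} (hβ : β ∈ posSystem a Φ) : (0 : ℝ) ≤ ⟪y, β⟫ := by
  obtain ⟨c, hcs, hc0, hc⟩ := hΔ.2.2 β hβ
  rw [hc, Finsupp.sum, inner_sum]
  refine Finset.sum_nonneg fun v hv => ?_
  rw [inner_smul_right]
  exact mul_nonneg (hc0 v) (hy v (hcs hv))

/-- Every positive root is conjugate to a simple one under the group generated by the simple reflections: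
take a positive root of least height `⟪a, ·⟫` in its orbit. -/
lemma exists_simple_conj (hΦ : IsRootSystem W Φ) (ha : IsGeneric W a)
    (hΔ : IsSimpleSystem (posSystem a Φ) Δ) {β : V} (hβ : β ∈ posSystem a Φ) :
    ∃ g ∈ genSubgroup Δ, g β ∈ Δ := by
  have hle : genSubgroup Δ ≤ W := genSubgroup_le hΦ fun x hx => (hΔ.1 hx).1
  obtain ⟨γ, ⟨hγp, g, hg, hgγ⟩, hmin⟩ :=
    Set.exists_min_image {γ | γ ∈ posSystem a Φ ∧ ∃ g ∈ genSubgroup Δ, g β = γ}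
      (fun γ => (⟪a, γ⟫ : ℝ)) (hΦ.finite.subset fun x hx => hx.1.1) ⟨β, hβ, 1, one_mem _, rfl⟩
  refine ⟨g, hg, ?_⟩
  rw [hgγ]
  have hex : ∃ α ∈ Δ, (0 : ℝ) < ⟪γ, α⟫ := by
    by_contra! h
    have h1 := inner_nonneg_of_simple hΔ (y := -γ) (fun α hα => by
      rw [inner_neg_left]; linarith [h α hα]) hγp
    rw [inner_neg_left] at h1
    linarith [real_inner_self_pos.2 (hΦ.ne_zero γ hγp.1)]
  obtain ⟨α, hα, hpos⟩ := hex
  by_contra hγΔ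
  have hne : γ ≠ α := fun h => hγΔ (h ▸ hα)
  have hαp := hΔ.1 hα
  obtain ⟨s, hs⟩ := exists_refl (hΦ.ne_zero α hαp.1)
  have hsG : s ∈ genSubgroup Δ := Subgroup.subset_closure ⟨α, hα, hs⟩
  have h2 := hmin (s γ) ⟨⟨root_map hΦ (hle hsG) hγp.1, simple_refl_pos hΦ ha hΔ hα hs hγp hne⟩,
    s * g, mul_mem hsG hg, by rw [← hgγ]; rfl⟩
  rw [hs.inner_apply] at h2
  have h3 : (0 : ℝ) < 2 * (⟪γ, α⟫ * ⟪a, α⟫) / ⟪α, α⟫ :=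
    div_pos (by linarith [mul_pos hpos hαp.2]) (real_inner_self_pos.2 hs.1)
  linarith

lemma le_genSubgroup (hΦ : IsRootSystem W Φ) (ha : IsGeneric W a)
    (hΔ : IsSimpleSystem (posSystem a Φ) Δ) : W ≤ genSubgroup Δ := by
  have hpos : ∀ β ∈ posSystem a Φ, ∀ s : V ≃ₗᵢ[ℝ] V, IsReflAlong s β → s ∈ genSubgroup Δ := by
    intro β hβ s hs
    obtain ⟨g, hg, hgβ⟩ := exists_simple_conj hΦ ha hΔ hβ
    have h1 : g * s * g⁻¹ ∈ genSubgroup Δ := Subgroup.subset_closure ⟨_, hgβ, hs.conj g⟩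
    have h2 := mul_mem (mul_mem (inv_mem hg) h1) hg
    simpa [mul_assoc] using h2
  rw [hΦ.gen]
  refine (Subgroup.closure_le _).2 ?_
  rintro s ⟨β, hβ, hs⟩
  rcases lt_or_gt_of_ne (inner_root_ne hΦ ha hβ) with h | h
  · exact hpos (-β) ⟨root_neg hΦ hβ, by rw [inner_neg_right]; linarith⟩ s hs.neg
  · exact hpos β ⟨hβ, h⟩ s hs

/-! ### Uniqueness of the dominant point of an orbit -/

lemma word_prod_mem (hΦ : IsRootSystem W Φ) (hΔ : IsSimpleSystem (posSystem a Φ) Δ)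
    {L : List (V ≃ₗᵢ[ℝ] V)} (hL : ∀ s ∈ L, ∃ β ∈ Δ, IsReflAlong s β) : L.prod ∈ W := by
  refine list_prod_mem fun s hs => ?_
  obtain ⟨β, hβ, h⟩ := hL s hs
  exact refl_mem hΦ (hΔ.1 hβ).1 h

/-- If a word `L` in simple reflections sends the simple root `α` to a negative root, then
`L.prod * s_α` is represented by a word with one letter fewer than `L`. -/
lemma deletion (hΦ : IsRootSystem W Φ) (ha : IsGeneric W a)
    (hΔ : IsSimpleSystem (posSystem a Φ) Δ) {t : V ≃ₗᵢ[ℝ] V} {α : V} (hα : α ∈ Δ)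
    (ht : IsReflAlong t α) (L : List (V ≃ₗᵢ[ℝ] V)) (hL : ∀ s ∈ L, ∃ β ∈ Δ, IsReflAlong s β)
    (hneg : (⟪a, L.prod α⟫ : ℝ) < 0) :
    ∃ L' : List (V ≃ₗᵢ[ℝ] V), (∀ s ∈ L', ∃ β ∈ Δ, IsReflAlong s β) ∧
      L'.length + 1 = L.length ∧ L'.prod = L.prod * t := by
  induction L with
  | nil =>
    have h : (⟪a, α⟫ : ℝ) < 0 := hneg
    linarith [(hΔ.1 hα).2]
  | cons s L ih =>
    have hL' : ∀ s ∈ L, ∃ β ∈ Δ, IsReflAlong s β := fun r hr => hL r (List.mem_cons_of_mem _ hr)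
    have hroot : L.prod α ∈ Φ := root_map hΦ (word_prod_mem hΦ hΔ hL') (hΔ.1 hα).1
    rcases lt_or_gt_of_ne (inner_root_ne hΦ ha hroot) with h | h
    · obtain ⟨M, hM, hlen, hprod⟩ := ih hL' h
      refine ⟨s :: M, ?_, by simp [hlen], by rw [List.prod_cons, List.prod_cons, hprod, mul_assoc]⟩
      intro r hr
      rcases List.mem_cons.1 hr with rfl | hr
      · exact hL _ List.mem_cons_self
      · exact hM r hr
    · obtain ⟨β, hβ, hs⟩ := hL s List.mem_cons_self
      -- `s` is the letter turning the root negative, so it is the reflection in `L.prod α`.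
      have heq : L.prod α = β := by
        by_contra hne
        have h1 := simple_refl_pos hΦ ha hΔ hβ hs ⟨hroot, h⟩ hne
        rw [List.prod_cons] at hneg
        exact lt_asymm h1 hneg
      have hc := ht.conj L.prod
      rw [heq] at hc
      have hsc := hs.unique hc
      refine ⟨L, hL', by simp, ?_⟩
      rw [List.prod_cons]
      have h2 : L.prod * t = s * L.prod := by rw [hsc]; group
      rw [mul_assoc, h2, ← mul_assoc, hs.mul_self, one_mul]

lemma exists_word (hΦ : IsRootSystem W Φ) (ha : IsGeneric W a)
    (hΔ : IsSimpleSystem (posSystem a Φ) Δ) {w : V ≃ₗᵢ[ℝ] V} (hw : w ∈ W) :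
    ∃ L : List (V ≃ₗᵢ[ℝ] V), (∀ s ∈ L, ∃ β ∈ Δ, IsReflAlong s β) ∧ L.prod = w := by
  have hw' := le_genSubgroup hΦ ha hΔ hw
  rw [genSubgroup, ← Subgroup.mem_toSubmonoid, Subgroup.closure_toSubmonoid] at hw'
  obtain ⟨L, hL, hp⟩ := Submonoid.exists_list_of_mem_closure hw'
  refine ⟨L, fun s hs => ?_, hp⟩
  rcases hL s hs with h | ⟨β, hβ, h⟩
  · exact h
  · refine ⟨β, hβ, ?_⟩
    have : s⁻¹ = s := by
      have h1 := inv_eq_of_mul_eq_one_left h.mul_self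
      rw [inv_inv] at h1
      exact h1.symm
    rwa [this] at h

lemma word_eq_one (hΦ : IsRootSystem W Φ) (ha : IsGeneric W a)
    (hΔ : IsSimpleSystem (posSystem a Φ) Δ) (n : ℕ) :
    ∀ L : List (V ≃ₗᵢ[ℝ] V), L.length = n → (∀ s ∈ L, ∃ β ∈ Δ, IsReflAlong s β) →
      (∀ α ∈ Δ, (0 : ℝ) < ⟪a, L.prod α⟫) → L.prod = 1 := by
  induction n using Nat.strong_induction_on with
  | _ n ih =>
    intro L hn hL hpos
    rcases L.eq_nil_or_concat with rfl | ⟨M, t, rfl⟩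
    · rfl
    · rw [List.concat_eq_append] at *
      obtain ⟨α, hα, ht⟩ := hL t (by simp)
      have hM : ∀ s ∈ M, ∃ β ∈ Δ, IsReflAlong s β := fun s hs => hL s (by simp [hs])
      have hprod : (M ++ [t]).prod = M.prod * t := by simp
      rw [hprod] at hpos ⊢
      have hneg : (⟪a, M.prod α⟫ : ℝ) < 0 := by
        have h1 : (0 : ℝ) < ⟪a, M.prod (t α)⟫ := hpos α hα
        rw [ht.apply_self, map_neg, inner_neg_right] at h1
        linarith
      obtain ⟨M', hM', hlen, hp⟩ := deletion hΦ ha hΔ hα ht M hM hneg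
      rw [← hp] at hpos ⊢
      exact ih M'.length (by simp at hn; omega) M' rfl hM' hpos

lemma dominant_eq (hΦ : IsRootSystem W Φ) (ha : IsGeneric W a)
    (hΔ : IsSimpleSystem (posSystem a Φ) Δ) {g : V ≃ₗᵢ[ℝ] V} (hg : g ∈ W)
    (hdom : ∀ α ∈ Δ, (0 : ℝ) ≤ ⟪g a, α⟫) : g a = a := by
  obtain ⟨L, hL, hp⟩ := exists_word hΦ ha hΔ (inv_mem hg)
  have h1 := word_eq_one hΦ ha hΔ _ L rfl hL (fun α hα => by
    rw [hp]
    have h2 := inner_inv_apply g⁻¹ a α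
    rw [inv_inv] at h2
    refine lt_of_le_of_ne (h2 ▸ hdom α hα) (Ne.symm ?_)
    exact inner_root_ne hΦ ha (root_map hΦ (inv_mem hg) (hΔ.1 hα).1))
  rw [hp, inv_eq_one] at h1
  rw [h1]
  rfl

/-! ### Faces -/

lemma genSubgroup_fix {I : Set V} {d : V} (hI : ∀ α ∈ I, (⟪d, α⟫ : ℝ) = 0)
    {u : V ≃ₗᵢ[ℝ] V} (hu : u ∈ genSubgroup I) : u d = d := by
  induction hu using Subgroup.closure_induction with
  | mem s hs =>
    obtain ⟨β, hβ, hs⟩ := hs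
    rw [hs.2, hI β hβ]
    simp
  | one => rfl
  | mul u v _ _ hu hv =>
    change u (v d) = d
    rw [hv, hu]
  | inv u _ hu => exact u.symm_apply_eq.2 hu.symm

/-- If `⟪d, ·⟫` is maximal on the orbit of `a` at `a`, then the maximizers in the orbit form the
orbit of `a` under the parabolic subgroup of the simple roots orthogonal to `d`. -/
lemma maximizer_iff (hWfin : (W : Set (V ≃ₗᵢ[ℝ] V)).Finite) (hΦ : IsRootSystem W Φ)
    (ha : IsGeneric W a) (hΔ : IsSimpleSystem (posSystem a Φ) Δ) {d : V}
    (hmax : ∀ u ∈ W, (⟪d, u a⟫ : ℝ) ≤ ⟪d, a⟫) (x : V) :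
    (x ∈ orbitSet W a ∧ (⟪d, x⟫ : ℝ) = ⟪d, a⟫) ↔
      x ∈ orbitSet (genSubgroup {α ∈ Δ | (⟪d, α⟫ : ℝ) = 0}) a := by
  set I := {α ∈ Δ | (⟪d, α⟫ : ℝ) = 0} with hIdef
  have hle : genSubgroup I ≤ W := genSubgroup_le hΦ fun x hx => (hΔ.1 hx.1).1
  have hfix : ∀ u ∈ genSubgroup I, ∀ x, (⟪d, u x⟫ : ℝ) = ⟪d, x⟫ := by
    intro u hu x
    rw [← inner_inv_apply, genSubgroup_fix (fun α hα => hα.2) (inv_mem hu)]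
  constructor
  · rintro ⟨⟨w, hw, rfl⟩, hx⟩
    obtain ⟨v, hv, hvmax⟩ := Set.exists_max_image (genSubgroup I : Set (V ≃ₗᵢ[ℝ] V))
      (fun v => (⟪a, v (w a)⟫ : ℝ)) (hWfin.subset hle) ⟨1, one_mem _⟩
    have hdom : ∀ α ∈ Δ, (0 : ℝ) ≤ ⟪(v * w) a, α⟫ := by
      intro α hα
      have hαp := hΔ.1 hα
      obtain ⟨s, hs⟩ := exists_refl (hΦ.ne_zero α hαp.1)
      have hsW := refl_mem hΦ hαp.1 hs
      by_cases hI : α ∈ I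
      · have hsI : s ∈ genSubgroup I := Subgroup.subset_closure ⟨α, hI, hs⟩
        have h1 : (⟪a, s ((v * w) a)⟫ : ℝ) ≤ ⟪a, (v * w) a⟫ := hvmax (s * v) (mul_mem hsI hv)
        exact nonneg_of_mul_nonneg_left (hs.nonneg_of_le h1) hαp.2
      · have h0 : (0 : ℝ) ≤ ⟪d, α⟫ := by
          have h2 := hs.nonneg_of_le (hmax s hsW)
          exact nonneg_of_mul_nonneg_right h2 hαp.2
        have hpos : (0 : ℝ) < ⟪d, α⟫ := lt_of_le_of_ne h0 fun h => hI ⟨hα, h.symm⟩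
        have h1 : (⟪d, s ((v * w) a)⟫ : ℝ) ≤ ⟪d, (v * w) a⟫ := by
          have h3 : (⟪d, (v * w) a⟫ : ℝ) = ⟪d, a⟫ := (hfix v hv (w a)).trans hx
          rw [h3]
          exact hmax (s * (v * w)) (mul_mem hsW (mul_mem (hle hv) hw))
        exact nonneg_of_mul_nonneg_left (hs.nonneg_of_le h1) hpos
    have h4 : v (w a) = a := dominant_eq hΦ ha hΔ (mul_mem (hle hv) hw) hdom
    refine ⟨v⁻¹, inv_mem hv, ?_⟩
    exact (v.symm_apply_eq.2 h4.symm).symm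
  · rintro ⟨u, hu, rfl⟩
    exact ⟨⟨u, hle hu, rfl⟩, hfix u hu a⟩

end Roots

/-- On a convex hull, the points where a linear functional attains an upper bound `M` are the
convex hull of the generators where it is attained. -/
lemma maximizers_convexHull (l : V →ₗ[ℝ] ℝ) (S : Set V) (M : ℝ) (hM : ∀ x ∈ S, l x ≤ M) :
    {x ∈ convexHull ℝ S | l x = M} = convexHull ℝ {x ∈ S | l x = M} := by
  apply Set.Subset.antisymm
  · rintro x ⟨hx, hxM⟩
    have hconv : Convex ℝ ({x | l x < M} ∪ convexHull ℝ {x ∈ S | l x = M}) := by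
      have hle : ∀ y ∈ convexHull ℝ {x ∈ S | l x = M}, l y ≤ M := fun y hy =>
        convexHull_min (t := {y | l y ≤ M}) (fun z hz => hz.2.le)
          (convex_halfSpace_le l.isLinear M) hy
      rw [convex_iff_forall_pos]
      intro y hy z hz p q hp hq hpq
      by_cases hyz : l y < M ∨ l z < M
      · left
        have hy' : l y ≤ M := hy.elim (fun h => le_of_lt h) (hle y)
        have hz' : l z ≤ M := hz.elim (fun h => le_of_lt h) (hle z)
        change l (p • y + q • z) < M
        rw [map_add, map_smul, map_smul, smul_eq_mul, smul_eq_mul]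
        have hMe : M = p * M + q * M := by rw [← add_mul, hpq, one_mul]
        rw [hMe]
        rcases hyz with h | h
        · exact add_lt_add_of_lt_of_le (mul_lt_mul_of_pos_left h hp)
            (mul_le_mul_of_nonneg_left hz' hq.le)
        · exact add_lt_add_of_le_of_lt (mul_le_mul_of_nonneg_left hy' hp.le)
            (mul_lt_mul_of_pos_left h hq)
      · rw [not_or] at hyz
        right
        exact convex_convexHull ℝ _ (hy.resolve_left hyz.1) (hz.resolve_left hyz.2)
          hp.le hq.le hpq
    have hsub : S ⊆ {x | l x < M} ∪ convexHull ℝ {x ∈ S | l x = M} := by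
      intro y hy
      rcases (hM y hy).lt_or_eq with h | h
      · exact Or.inl h
      · exact Or.inr (subset_convexHull ℝ _ ⟨hy, h⟩)
    rcases convexHull_min hsub hconv hx with h | h
    · exact absurd hxM (ne_of_lt h)
    · exact h
  · intro x hx
    exact ⟨convexHull_mono (fun y hy => hy.1) hx,
      convexHull_min (t := {y | l y = M}) (fun z hz => hz.2) (convex_hyperplane l.isLinear M) hx⟩

/-- every nonempty exposed face of the permutahedron is of the form `w(F_I)`
for some `w ∈ W` and `I ⊆ Δ`. -/
theorem exposed_face_eq_translate [FiniteDimensional ℝ V]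
    (W : Subgroup (V ≃ₗᵢ[ℝ] V)) (hWfin : (W : Set (V ≃ₗᵢ[ℝ] V)).Finite)
    (Φ : Set V) (hΦ : IsRootSystem W Φ) (a : V) (ha : IsGeneric W a)
    (Δ : Set V) (hΔ : IsSimpleSystem (posSystem a Φ) Δ) :
    ∀ B : Set V, IsExposed ℝ (permutahedron W a) B → B.Nonempty →
      ∃ w ∈ W, ∃ I ⊆ Δ, B = (⇑w) '' permutahedron (genSubgroup I) a := by
  intro B hB hBne
  obtain ⟨l, rfl⟩ := hB hBne
  obtain ⟨c, hc⟩ : ∃ c : V, ∀ x, l x = ⟪c, x⟫ :=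
    ⟨(InnerProductSpace.toDual ℝ V).symm l, fun x => InnerProductSpace.toDual_symm_apply.symm⟩
  obtain ⟨w, hw, hwmax⟩ := Set.exists_max_image (W : Set (V ≃ₗᵢ[ℝ] V))
    (fun w => (⟪c, w a⟫ : ℝ)) hWfin ⟨1, one_mem _⟩
  have hmax : ∀ u ∈ W, (⟪w⁻¹ c, u a⟫ : ℝ) ≤ ⟪w⁻¹ c, a⟫ := by
    intro u hu
    rw [inner_inv_apply, inner_inv_apply]
    exact hwmax (w * u) (mul_mem hw hu)
  have hiff := maximizer_iff hWfin hΦ ha hΔ hmax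
  refine ⟨w, hw, {α ∈ Δ | (⟪w⁻¹ c, α⟫ : ℝ) = 0}, fun x hx => hx.1, ?_⟩
  have hM : ∀ x ∈ orbitSet W a, l.toLinearMap x ≤ l (w a) := by
    rintro x ⟨u, hu, rfl⟩
    change l (u a) ≤ _
    rw [hc, hc]
    exact hwmax u hu
  have hM' : ∀ x ∈ permutahedron W a, l x ≤ l (w a) := fun x hx =>
    convexHull_min (t := {y | l y ≤ l (w a)}) hM
      (convex_halfSpace_le l.toLinearMap.isLinear _) hx
  have hwa : w a ∈ permutahedron W a := subset_convexHull ℝ _ ⟨w, hw, rfl⟩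
  have hface : {x ∈ permutahedron W a | ∀ y ∈ permutahedron W a, l y ≤ l x} =
      {x ∈ convexHull ℝ (orbitSet W a) | l.toLinearMap x = l (w a)} := by
    ext x
    constructor
    · rintro ⟨hx, h⟩
      exact ⟨hx, le_antisymm (hM' x hx) (h _ hwa)⟩
    · rintro ⟨hx, h⟩
      refine ⟨hx, fun y hy => ?_⟩
      change l x = l (w a) at h
      rw [h]
      exact hM' y hy
  rw [hface, maximizers_convexHull _ _ _ hM, permutahedron]
  refine Eq.trans ?_ (LinearMap.image_convexHull w.toLinearEquiv.toLinearMap _).symm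
  congr 1
  ext x
  constructor
  · rintro ⟨⟨u, hu, rfl⟩, h⟩
    refine ⟨(w⁻¹ * u) a, (hiff _).1 ⟨⟨_, mul_mem (inv_mem hw) hu, rfl⟩, ?_⟩, ?_⟩
    · change l (u a) = _ at h
      rw [hc, hc] at h
      rw [inner_inv_apply, inner_inv_apply, ← h]
      change (⟪c, w (w.symm (u a))⟫ : ℝ) = _
      rw [w.apply_symm_apply]
    · exact w.apply_symm_apply (u a)
  · rintro ⟨x, hx, rfl⟩
    obtain ⟨⟨u, hu, rfl⟩, h⟩ := (hiff _).2 hx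
    refine ⟨⟨w * u, mul_mem hw hu, rfl⟩, ?_⟩
    rw [inner_inv_apply, inner_inv_apply, ← hc, ← hc] at h
    exact h
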